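/- Fix constants a, δ with a > 2δ ≥ 0. There exist constants C₁, C₂, C₃ > 0 depending only on a such that the following holds. Let (X_t)_{t≥0} be an integer-valued discrete-time process adapted to a filtration (F_t)_{t≥0} satisfying: X_{t+1} − X_t ∈ {−1, 0, 1} almost surely; E[X_{t+1} − X_t | F_t] ≥ −δ for all t; Var(X_{t+1} | F_t) ≥ a for all t; and X_0 ≥ 0 almost surely. Then for τ_r⁺ = inf{t ≥ 0 : X_t ≥ r} and every r > 0 and every integer t ≥ 1, P(τ_r⁺ ≤ t) ≥ C₁ exp(−C₂ (r/√t + δ√t)²) − C₃ t^{−1/2}. -/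

import Mathlib

open MeasureTheory

namespace HitAux

lemma exp_step (θ d : ℝ) (hd : d ∈ ({-1, 0, 1} : Set ℝ)) :
    Real.exp (θ * d) = 1 + Real.sinh θ * d + (Real.cosh θ - 1) * d ^ 2 := by
  have h1 := Real.cosh_add_sinh θ
  have h2 := Real.cosh_sub_sinh θ
  rcases hd with h | h | h
  · subst h
    rw [mul_neg_one]
    linarith
  · subst h
    simp
  · have h : d = 1 := h
    subst h
    rw [mul_one]
    linarith

lemma cosh_lower (θ : ℝ) : 1 + θ ^ 2 / 2 ≤ Real.cosh θ := by
  have h1 := Real.cosh_sq (θ / 2)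
  have h2 := Real.cosh_two_mul (θ / 2)
  have h3 : 2 * (θ / 2) = θ := by ring
  rw [h3] at h2
  have h4 : (θ / 2) ^ 2 ≤ Real.sinh (θ / 2) ^ 2 := by
    rcases le_total 0 θ with h | h
    · have : θ / 2 ≤ Real.sinh (θ / 2) := Real.self_le_sinh_iff.2 (by linarith)
      nlinarith
    · have : Real.sinh (θ / 2) ≤ θ / 2 := Real.sinh_le_self_iff.2 (by linarith)
      nlinarith
  nlinarith

lemma sinh_upper (θ : ℝ) (h0 : 0 ≤ θ) (h1 : θ ≤ 1) : Real.sinh θ ≤ 2 * θ := by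
  have a1 := abs_le.1 (Real.abs_exp_sub_one_sub_id_le (x := θ) (by rw [abs_of_nonneg h0]; exact h1))
  have a2 := abs_le.1 (Real.abs_exp_sub_one_sub_id_le (x := -θ)
    (by rw [abs_neg, abs_of_nonneg h0]; exact h1))
  rw [Real.sinh_eq]
  nlinarith [a1.1, a1.2, a2.1, a2.2]

lemma rate_bound (a δ θ : ℝ) (ha : 0 < a) (ha1 : a ≤ 1) (hδ : 0 ≤ δ) (h0 : 0 ≤ θ) (h1 : θ ≤ 1)
    (hθ : 8 * δ ≤ a * θ) :
    Real.exp (a * θ ^ 2 / 8) ≤ 1 + Real.sinh θ * (-δ) + (Real.cosh θ - 1) * a := by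
  have hs := sinh_upper θ h0 h1
  have hc := cosh_lower θ
  have hq : 0 ≤ a * θ ^ 2 / 8 := by positivity
  have hq1 : a * θ ^ 2 / 8 ≤ 1 := by nlinarith
  have he := (abs_le.1 (Real.abs_exp_sub_one_sub_id_le (x := a * θ ^ 2 / 8)
    (by rw [abs_of_nonneg hq]; exact hq1))).2
  have e1 : Real.sinh θ * δ ≤ 2 * θ * δ := mul_le_mul_of_nonneg_right hs hδ
  have e2 : θ ^ 2 / 2 * a ≤ (Real.cosh θ - 1) * a :=
    mul_le_mul_of_nonneg_right (by linarith) ha.le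
  have e3 : θ * (8 * δ) ≤ θ * (a * θ) := mul_le_mul_of_nonneg_left hθ h0
  nlinarith

lemma pull {Ω : Type} {m m0 : MeasurableSpace Ω} (hm : m ≤ m0) (μ : Measure Ω)
    [IsProbabilityMeasure μ] (f g : Ω → ℝ) (b B : ℝ) (hf : Integrable f μ)
    (hg : StronglyMeasurable[m] g) (hg0 : ∀ ω, 0 ≤ g ω) (hgB : ∀ ω, g ω ≤ B)
    (hb : ∀ᵐ ω ∂μ, b ≤ (μ[f|m]) ω) :
    b * ∫ ω, g ω ∂μ ≤ ∫ ω, g ω * f ω ∂μ := by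
  have hgm : AEStronglyMeasurable g μ := (hg.mono hm).aestronglyMeasurable
  have hgn : ∀ᵐ ω ∂μ, ‖g ω‖ ≤ B := by
    filter_upwards with ω
    rw [Real.norm_of_nonneg (hg0 ω)]
    exact hgB ω
  have hgi : Integrable g μ := Integrable.of_bound hgm B hgn
  have hgf : Integrable (g * f) μ := hf.bdd_mul hgm hgn
  have hgf' : Integrable (g * μ[f|m]) μ := integrable_condExp.bdd_mul hgm hgn
  have h1 := condExp_mul_of_stronglyMeasurable_left hg hgf hf
  have h2 : ∫ ω, g ω * f ω ∂μ = ∫ ω, (g * μ[f|m]) ω ∂μ := by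
    rw [← integral_congr_ae h1, integral_condExp hm]
    rfl
  rw [h2, ← integral_const_mul]
  refine integral_mono_ae (hgi.const_mul b) hgf' ?_
  filter_upwards [hb] with ω hω
  have := mul_le_mul_of_nonneg_left hω (hg0 ω)
  simp only [Pi.mul_apply]
  linarith

lemma one_step {Ω : Type} {m m0 : MeasurableSpace Ω} (hm : m ≤ m0) (μ : Measure Ω)
    [IsProbabilityMeasure μ] (D g : Ω → ℝ) (a δ θ c B : ℝ) (hD : Measurable D)
    (hD1 : ∀ᵐ ω ∂μ, D ω ∈ ({-1, 0, 1} : Set ℝ))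
    (hg : StronglyMeasurable[m] g) (hg0 : ∀ ω, 0 ≤ g ω) (hgB : ∀ ω, g ω ≤ B)
    (hd : ∀ᵐ ω ∂μ, -δ ≤ (μ[D|m]) ω) (hv : ∀ᵐ ω ∂μ, a ≤ (μ[D ^ 2|m]) ω)
    (hθ : 0 ≤ θ) (hc : c ≤ 1 + Real.sinh θ * (-δ) + (Real.cosh θ - 1) * a) :
    c * ∫ ω, g ω ∂μ ≤ ∫ ω, g ω * Real.exp (θ * D ω) ∂μ := by
  have hgm : AEStronglyMeasurable g μ := (hg.mono hm).aestronglyMeasurable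
  have hgn : ∀ᵐ ω ∂μ, ‖g ω‖ ≤ B := by
    filter_upwards with ω
    rw [Real.norm_of_nonneg (hg0 ω)]
    exact hgB ω
  have hgi : Integrable g μ := Integrable.of_bound hgm B hgn
  have hDi : Integrable D μ := by
    refine Integrable.of_bound hD.aestronglyMeasurable 1 ?_
    filter_upwards [hD1] with ω hω
    rcases hω with h | h | h
    · simp [h]
    · simp [h]
    · have h : D ω = 1 := h
      simp [h]
  have hD2 : Integrable (D ^ 2) μ := by
    refine Integrable.of_bound (hD.pow_const 2).aestronglyMeasurable 1 ?_
    filter_upwards [hD1] with ω hω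
    rcases hω with h | h | h
    · simp [h]
    · simp [h]
    · have h : D ω = 1 := h
      simp [h]
  have p1 := pull hm μ D g (-δ) B hDi hg hg0 hgB hd
  have p2 := pull hm μ (D ^ 2) g a B hD2 hg hg0 hgB hv
  have i1 : Integrable (fun ω => g ω * D ω) μ := hDi.bdd_mul hgm hgn
  have i2 : Integrable (fun ω => g ω * (D ^ 2) ω) μ := hD2.bdd_mul hgm hgn
  have i3 : Integrable (fun ω => g ω + Real.sinh θ * (g ω * D ω)) μ := hgi.add (i1.const_mul _)
  have key : ∫ ω, g ω * Real.exp (θ * D ω) ∂μ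
      = ∫ ω, g ω ∂μ + Real.sinh θ * ∫ ω, g ω * D ω ∂μ
        + (Real.cosh θ - 1) * ∫ ω, g ω * (D ^ 2) ω ∂μ := by
    rw [← integral_const_mul, ← integral_const_mul, ← integral_add hgi (i1.const_mul _),
      ← integral_add i3 (i2.const_mul _)]
    refine integral_congr_ae ?_
    filter_upwards [hD1] with ω hω
    rw [exp_step θ _ hω]
    simp only [Pi.pow_apply]
    ring
  have hI : 0 ≤ ∫ ω, g ω ∂μ := integral_nonneg hg0
  have hs : 0 ≤ Real.sinh θ := Real.sinh_nonneg_iff.2 hθ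
  have hch : 0 ≤ Real.cosh θ - 1 := by linarith [Real.one_le_cosh θ]
  have q1 := mul_le_mul_of_nonneg_left p1 hs
  have q2 := mul_le_mul_of_nonneg_left p2 hch
  have q3 := mul_le_mul_of_nonneg_right hc hI
  rw [key]
  nlinarith

/-- the main estimate for the survival event -/
lemma main {Ω : Type} [m0 : MeasurableSpace Ω] (μ : Measure Ω)
    [IsProbabilityMeasure μ] (F : Filtration ℕ m0) (X : ℕ → Ω → ℝ) (hX : Adapted F X)
    (a δ θ c r : ℝ)
    (hD1 : ∀ t : ℕ, ∀ᵐ ω ∂μ, X (t + 1) ω - X t ω ∈ ({-1, 0, 1} : Set ℝ))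
    (hd : ∀ t : ℕ, ∀ᵐ ω ∂μ, -δ ≤ (μ[X (t + 1) - X t|F t]) ω)
    (hv : ∀ t : ℕ, ∀ᵐ ω ∂μ, a ≤ (μ[(X (t + 1) - X t) ^ 2|F t]) ω)
    (h0 : ∀ᵐ ω ∂μ, 0 ≤ X 0 ω) (hr : 0 < r)
    (hθ : 0 ≤ θ) (hc1 : 1 ≤ c)
    (hc : c ≤ 1 + Real.sinh θ * (-δ) + (Real.cosh θ - 1) * a) (t : ℕ) :
    c ^ t ≤ Real.exp (θ * r)
      + c ^ t * Real.exp (θ * (r + 1)) * μ.real {ω | ∃ s ≤ t, r ≤ X s ω} := by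
  set A : ℕ → Set Ω := fun s => {ω | ∀ u ≤ s, X u ω < r} with hA
  set g : ℕ → Ω → ℝ := fun s => (A s).indicator (fun ω => Real.exp (θ * X s ω)) with hg
  have hXm : ∀ s, Measurable (X s) := fun s => (hX s).mono (F.le s) le_rfl
  have hAF : ∀ s, MeasurableSet[F s] (A s) := by
    intro s
    have : A s = ⋂ u, ⋂ (_ : u ≤ s), {ω | X u ω < r} := by
      ext ω; simp [hA]
    rw [this]
    refine MeasurableSet.iInter fun u => MeasurableSet.iInter fun hu => ?_
    exact F.mono hu _ (measurableSet_lt (hX u) measurable_const)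
  have hAm : ∀ s, MeasurableSet (A s) := fun s => F.le s _ (hAF s)
  have hAc : ∀ s, {ω | ∃ u ≤ s, r ≤ X u ω} = (A s)ᶜ := by
    intro s; ext ω; simp [hA]
  have hgS : ∀ s, StronglyMeasurable[F s] (g s) := by
    intro s
    have h1 : Measurable[F s] (fun ω => Real.exp (θ * X s ω)) :=
      Real.measurable_exp.comp ((hX s).const_mul θ)
    exact (h1.indicator (hAF s)).stronglyMeasurable
  have hg0 : ∀ s ω, 0 ≤ g s ω := fun s ω =>
    Set.indicator_nonneg (fun _ _ => (Real.exp_pos _).le) ω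
  have hgB : ∀ s ω, g s ω ≤ Real.exp (θ * r) := by
    intro s ω
    by_cases h : ω ∈ A s
    · simp only [hg, Set.indicator_of_mem h]
      exact Real.exp_le_exp.2 (mul_le_mul_of_nonneg_left (h s le_rfl).le hθ)
    · simp only [hg, Set.indicator_of_notMem h]
      exact (Real.exp_pos _).le
  have hgi : ∀ s, Integrable (g s) μ := by
    intro s
    refine Integrable.of_bound ((hgS s).mono (F.le s)).aestronglyMeasurable (Real.exp (θ * r)) ?_
    filter_upwards with ω
    rw [Real.norm_of_nonneg (hg0 s ω)]
    exact hgB s ω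
  set E := Real.exp (θ * (r + 1)) with hE
  have hE0 : 0 < E := Real.exp_pos _
  have hE1 : 1 ≤ E := Real.one_le_exp (by positivity)
  have hii : ∀ S : Set Ω, MeasurableSet S → Integrable (S.indicator (fun _ => E)) μ :=
    fun S hS => (integrable_const E).indicator hS
  have hint : ∀ S : Set Ω, MeasurableSet S → ∫ ω, S.indicator (fun _ => E) ω ∂μ = E * μ.real S := by
    intro S hS
    rw [integral_indicator_const _ hS, smul_eq_mul, mul_comm]
  have step : ∀ s, c ^ s ≤ ∫ ω, g s ω ∂μ + c ^ s * E * μ.real (A s)ᶜ := by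
    intro s
    induction s with
    | zero =>
      rw [pow_zero, one_mul, ← hint _ (hAm 0).compl, ← integral_add (hgi 0) (hii _ (hAm 0).compl)]
      calc (1 : ℝ) = ∫ ω, (1 : ℝ) ∂μ := by simp
        _ ≤ _ := by
          refine integral_mono_ae (integrable_const _) ((hgi 0).add (hii _ (hAm 0).compl)) ?_
          filter_upwards [h0] with ω hω
          by_cases h : ω ∈ A 0
          · simp only [hg, Set.indicator_of_mem h]
            rw [Set.indicator_of_notMem (by simpa using h), add_zero]
            exact Real.one_le_exp (by positivity)
          · simp only [hg, Set.indicator_of_notMem h]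
            rw [Set.indicator_of_mem (by simpa using h), zero_add]
            exact hE1
    | succ s ih =>
      have h1 := one_step (F.le s) μ (X (s + 1) - X s) (g s) a δ θ c _ ((hXm _).sub (hXm _))
        (hD1 s) (hgS s) (hg0 s) (hgB s) (hd s) (hv s) hθ hc
      have hsub : A (s + 1) ⊆ A s := fun ω h u hu => h u (by omega)
      have hdm : MeasurableSet (A s \ A (s + 1)) := (hAm _).diff (hAm _)
      have h2 : ∫ ω, g s ω * Real.exp (θ * (X (s + 1) - X s) ω) ∂μ
          ≤ ∫ ω, g (s + 1) ω ∂μ + E * μ.real (A s \ A (s + 1)) := by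
        rw [← hint _ hdm, ← integral_add (hgi _) (hii _ hdm)]
        refine integral_mono_of_nonneg ?_ ((hgi _).add (hii _ hdm)) ?_
        · filter_upwards with ω
          exact mul_nonneg (hg0 s ω) (Real.exp_pos _).le
        · filter_upwards [hD1 s] with ω hω
          have hle : X (s + 1) ω ≤ X s ω + 1 := by
            rcases hω with h | h | h
            · linarith
            · linarith
            · have h : X (s + 1) ω - X s ω = 1 := h
              linarith
          by_cases h : ω ∈ A s
          · have e1 : g s ω * Real.exp (θ * (X (s + 1) - X s) ω) = Real.exp (θ * X (s + 1) ω) := by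
              simp only [hg, Set.indicator_of_mem h]
              rw [← Real.exp_add]
              congr 1
              simp only [Pi.sub_apply]
              ring
            rw [e1]
            by_cases h' : ω ∈ A (s + 1)
            · simp only [hg, Set.indicator_of_mem h']
              rw [Set.indicator_of_notMem (fun hh => hh.2 h'), add_zero]
            · simp only [hg, Set.indicator_of_notMem h']
              have hmem : ω ∈ A s \ A (s + 1) := ⟨h, h'⟩
              rw [Set.indicator_of_mem hmem, zero_add]
              have := h s le_rfl
              exact Real.exp_le_exp.2 (mul_le_mul_of_nonneg_left (by linarith) hθ)
          · have e1 : g s ω = 0 := by simp only [hg, Set.indicator_of_notMem h]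
            rw [e1, zero_mul]
            exact add_nonneg (hg0 _ _) (Set.indicator_nonneg (fun _ _ => hE0.le) _)
      have h3 : μ.real (A (s + 1))ᶜ = μ.real (A s)ᶜ + μ.real (A s \ A (s + 1)) := by
        rw [measureReal_compl (hAm _), measureReal_compl (hAm _),
          measureReal_sdiff hsub (hAm _)]
        ring
      rw [h3]
      have hc0 : 0 ≤ c := by linarith
      have hcs : 1 ≤ c ^ (s + 1) := one_le_pow₀ hc1
      have h4 := mul_le_mul_of_nonneg_left ih hc0
      have h5 : E * μ.real (A s \ A (s + 1)) ≤ c ^ (s + 1) * (E * μ.real (A s \ A (s + 1))) :=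
        le_mul_of_one_le_left (by positivity) hcs
      calc c ^ (s + 1) = c * c ^ s := pow_succ' _ _
        _ ≤ _ := h4
        _ = c * ∫ ω, g s ω ∂μ + c ^ (s + 1) * E * μ.real (A s)ᶜ := by rw [pow_succ']; ring
        _ ≤ _ := by nlinarith
  have hfin : ∫ ω, g t ω ∂μ ≤ Real.exp (θ * r) := by
    calc ∫ ω, g t ω ∂μ ≤ ∫ ω, Real.exp (θ * r) ∂μ :=
          integral_mono (hgi t) (integrable_const _) (hgB t)
      _ = _ := by simp
  rw [hAc]
  linarith [step t]

lemma var_to_sq {Ω : Type} [m0 : MeasurableSpace Ω] (μ : Measure Ω)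
    [IsProbabilityMeasure μ] (F : Filtration ℕ m0) (X : ℕ → Ω → ℝ) (hX : Adapted F X)
    (a : ℝ) (ha : 0 < a)
    (hD1 : ∀ t : ℕ, ∀ᵐ ω ∂μ, X (t + 1) ω - X t ω ∈ ({-1, 0, 1} : Set ℝ))
    (hv : ∀ t : ℕ, ∀ᵐ ω ∂μ, a ≤ (μ[(X (t + 1) - μ[X (t + 1)|F t]) ^ 2|F t]) ω) (t : ℕ) :
    ∀ᵐ ω ∂μ, a ≤ (μ[(X (t + 1) - X t) ^ 2|F t]) ω := by
  have hXm : ∀ s, Measurable (X s) := fun s => (hX s).mono (F.le s) le_rfl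
  have hI : Integrable (X (t + 1)) μ := by
    by_contra hn
    have h1 : ¬ Integrable ((X (t + 1)) ^ 2) μ := by
      intro h
      exact hn (((memLp_two_iff_integrable_sq (hXm _).aestronglyMeasurable).2 h).integrable
        (by norm_num))
    have h2 := hv t
    rw [condExp_of_not_integrable hn, sub_zero, condExp_of_not_integrable h1] at h2
    obtain ⟨ω, hω⟩ := h2.exists
    simp only [Pi.zero_apply] at hω
    linarith
  have hDn : ∀ᵐ ω ∂μ, ‖(X (t + 1) - X t) ω‖ ≤ 1 := by
    filter_upwards [hD1 t] with ω hω
    rcases hω with h | h | h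
    · simp [h]
    · simp [h]
    · have h : X (t + 1) ω - X t ω = 1 := h
      simp [h]
  have hDm : AEStronglyMeasurable (X (t + 1) - X t) μ :=
    ((hXm _).sub (hXm _)).aestronglyMeasurable
  have hDi : Integrable (X (t + 1) - X t) μ := Integrable.of_bound hDm 1 hDn
  have hXi : Integrable (X t) μ := by
    have := hI.sub hDi
    simpa using this
  have hL : MemLp (X (t + 1) - X t) 2 μ := MemLp.of_bound hDm 1 hDn
  have h1 := condExp_sub hI hXi (F t)
  have h2 : μ[X t|F t] = X t := condExp_of_stronglyMeasurable (F.le t) (hX t).stronglyMeasurable hXi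
  have h3 : (X (t + 1) - μ[X (t + 1)|F t]) ^ 2
      =ᵐ[μ] (X (t + 1) - X t - μ[X (t + 1) - X t|F t]) ^ 2 := by
    filter_upwards [h1] with ω hω
    simp only [Pi.pow_apply, Pi.sub_apply] at hω ⊢
    rw [hω, h2]
    ring
  have h4 := condExp_congr_ae (m := F t) h3
  have h5 := ProbabilityTheory.condVar_ae_le_condExp_sq (F.le t) hL
  filter_upwards [hv t, h4, h5] with ω w1 w2 w3
  rw [w2] at w1
  exact w1.trans w3

end HitAux

/-- **Hitting-time lower bound** (Lemma 2.2). Fix `a > 2δ ≥ 0`. There are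
constants `C₁, C₂, C₃ > 0` depending only on `a` such that: for every
integer-valued adapted process with `±1` (or `0`) steps, conditional drift at
least `−δ`, conditional variance at least `a`, and `X₀ ≥ 0`, the probability of
reaching level `r` by time `t` is at least
`C₁ exp(−C₂ (r/√t + δ√t)²) − C₃ t^{−1/2}`. -/
theorem hitting_time_lower_bound (a : ℝ) (ha : 0 < a) :
    ∃ C₁ C₂ C₃ : ℝ, 0 < C₁ ∧ 0 < C₂ ∧ 0 < C₃ ∧
      ∀ (δ : ℝ), 0 ≤ δ → 2 * δ < a →
        ∀ (Ω : Type) [m : MeasurableSpace Ω] (μ : Measure Ω) [IsProbabilityMeasure μ]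
          (F : Filtration ℕ m) (X : ℕ → Ω → ℝ), Adapted F X →
          (∀ t : ℕ, ∀ᵐ ω ∂μ, X (t + 1) ω - X t ω ∈ ({-1, 0, 1} : Set ℝ)) →
          (∀ t : ℕ, ∀ᵐ ω ∂μ, ∃ k : ℤ, X t ω = (k : ℝ)) →
          (∀ t : ℕ, ∀ᵐ ω ∂μ, -δ ≤ (μ[X (t + 1) - X t|F t]) ω) →
          (∀ t : ℕ, ∀ᵐ ω ∂μ,
            a ≤ (μ[(X (t + 1) - μ[X (t + 1)|F t]) ^ 2|F t]) ω) →
          (∀ᵐ ω ∂μ, 0 ≤ X 0 ω) →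
          ∀ (r : ℝ), 0 < r → ∀ (t : ℕ), 1 ≤ t →
            C₁ * Real.exp (-C₂ * (r / Real.sqrt t + δ * Real.sqrt t) ^ 2)
                - C₃ / Real.sqrt t ≤
              (μ {ω | ∃ s ≤ t, r ≤ X s ω}).toReal := by
  set b : ℝ := min a 1 with hb
  have hb0 : 0 < b := lt_min ha one_pos
  have hb1 : b ≤ 1 := min_le_right _ _
  have hba : b ≤ a := min_le_left _ _
  set K : ℝ := 16 / b with hK
  have hKb : K * b = 16 := by rw [hK]; field_simp
  have hK16 : 16 ≤ K := by rw [hK, le_div_iff₀ hb0]; nlinarith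
  have hK0 : 0 < K := by linarith
  refine ⟨Real.exp (-1 - K) / 2, 2 * K, 2 * K, by positivity, by positivity, by positivity, ?_⟩
  intro δ hδ _ Ω m μ _ F X hX hD1 _ hd hv h0 r hr t ht
  set q : ℝ := Real.sqrt t with hq
  have htR : (1 : ℝ) ≤ t := by exact_mod_cast ht
  have hq0 : 0 < q := Real.sqrt_pos.2 (by linarith)
  have hqq : q * q = t := Real.mul_self_sqrt (by linarith)
  set y : ℝ := r / q + δ * q with hy
  have hy1 : r ≤ y * q := by
    have : r / q * q = r := by field_simp
    rw [hy, add_mul, this]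
    nlinarith [mul_nonneg (mul_nonneg hδ hq0.le) hq0.le]
  have hy2 : δ * q ≤ y := by
    have : 0 ≤ r / q := by positivity
    rw [hy]; linarith
  have hy0 : 0 ≤ y := le_trans (by positivity) hy2
  have hC1 : Real.exp (-1 - K) ≤ 1 := Real.exp_le_one_iff.2 (by linarith)
  by_cases hcase : K * (y + 1) ≤ q
  swap
  · push Not at hcase
    have e1 : Real.exp (-(2 * K) * y ^ 2) * (1 + 2 * K * y ^ 2) ≤ 1 := by
      have : 1 + 2 * K * y ^ 2 ≤ Real.exp (2 * K * y ^ 2) := by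
        linarith [Real.add_one_le_exp (2 * K * y ^ 2)]
      calc Real.exp (-(2 * K) * y ^ 2) * (1 + 2 * K * y ^ 2)
          ≤ Real.exp (-(2 * K) * y ^ 2) * Real.exp (2 * K * y ^ 2) :=
            mul_le_mul_of_nonneg_left this (Real.exp_pos _).le
        _ = 1 := by rw [← Real.exp_add]; simp
    have e2 : y + 1 ≤ 2 * (1 + 2 * K * y ^ 2) := by nlinarith [sq_nonneg (y - 1), sq_nonneg y]
    have e0 := Real.exp_pos (-(2 * K) * y ^ 2)
    have e3 : Real.exp (-(2 * K) * y ^ 2) * q ≤ 2 * K := by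
      calc Real.exp (-(2 * K) * y ^ 2) * q
          ≤ Real.exp (-(2 * K) * y ^ 2) * (K * (2 * (1 + 2 * K * y ^ 2))) :=
            mul_le_mul_of_nonneg_left
              (hcase.le.trans (mul_le_mul_of_nonneg_left e2 hK0.le)) e0.le
        _ = 2 * K * (Real.exp (-(2 * K) * y ^ 2) * (1 + 2 * K * y ^ 2)) := by ring
        _ ≤ 2 * K * 1 := mul_le_mul_of_nonneg_left e1 (by positivity)
        _ = 2 * K := by ring
    have e4 : Real.exp (-(2 * K) * y ^ 2) ≤ 2 * K / q := by
      rw [le_div_iff₀ hq0]; exact e3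
    have e5 : Real.exp (-1 - K) / 2 * Real.exp (-(2 * K) * y ^ 2)
        ≤ 1 * Real.exp (-(2 * K) * y ^ 2) :=
      mul_le_mul_of_nonneg_right (by linarith) e0.le
    have e6 : 0 ≤ (μ {ω | ∃ s ≤ t, r ≤ X s ω}).toReal := ENNReal.toReal_nonneg
    linarith
  · set θ : ℝ := K * (y + 1) / q with hθ
    have hθq : θ * q = K * (y + 1) := by rw [hθ]; field_simp
    have hθ0 : 0 ≤ θ := by positivity
    have hθ1 : θ ≤ 1 := by rw [hθ, div_le_one hq0]; exact hcase
    have hθδ : 8 * δ ≤ b * θ := by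
      have : 8 * δ * q ≤ b * θ * q := by
        calc 8 * δ * q ≤ 16 * (y + 1) := by linarith
          _ = b * θ * q := by rw [mul_assoc, hθq, ← hKb]; ring
      exact le_of_mul_le_mul_right this hq0
    have hv' := HitAux.var_to_sq μ F X hX a ha hD1 hv
    have hmain := HitAux.main μ F X hX b δ θ (Real.exp (b * θ ^ 2 / 8)) r hD1 hd
      (fun s => (hv' s).mono fun ω h => hba.trans h) h0 hr hθ0 (Real.one_le_exp (by positivity))
      (HitAux.rate_bound b δ θ hb0 hb1 hδ hθ0 hθ1 hθδ) t
    rw [← Real.exp_nat_mul] at hmain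
    set p := μ.real {ω | ∃ s ≤ t, r ≤ X s ω} with hp
    have hθr : θ * r ≤ K * (y + 1) * y := by
      calc θ * r ≤ θ * (y * q) := mul_le_mul_of_nonneg_left hy1 hθ0
        _ = θ * q * y := by ring
        _ = _ := by rw [hθq]
    have hexpo : θ * r + 1 ≤ (t : ℝ) * (b * θ ^ 2 / 8) := by
      have : (t : ℝ) * (b * θ ^ 2 / 8) = 2 * K * (y + 1) ^ 2 := by
        rw [← hqq]
        calc q * q * (b * θ ^ 2 / 8) = b * (θ * q) ^ 2 / 8 := by ring
          _ = (K * b) * K * (y + 1) ^ 2 / 8 := by rw [hθq]; ring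
          _ = _ := by rw [hKb]; ring
      rw [this]
      nlinarith [mul_nonneg hK0.le hy0, mul_nonneg hK0.le (sq_nonneg y)]
    set T := Real.exp ((t : ℝ) * (b * θ ^ 2 / 8)) with hT
    have hT0 : 0 < T := Real.exp_pos _
    have h2 : 2 * Real.exp (θ * r) ≤ T := by
      have : Real.exp (θ * r + 1) ≤ T := Real.exp_le_exp.2 hexpo
      rw [Real.exp_add] at this
      have h1 : (2 : ℝ) ≤ Real.exp 1 := by linarith [Real.add_one_le_exp (1 : ℝ)]
      nlinarith [Real.exp_pos (θ * r)]
    have h3 : 1 / 2 ≤ Real.exp (θ * (r + 1)) * p := by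
      have : T * (1 / 2) ≤ T * (Real.exp (θ * (r + 1)) * p) := by linarith
      exact le_of_mul_le_mul_left this hT0
    have h4 : Real.exp (-(θ * (r + 1))) / 2 ≤ p := by
      have := mul_le_mul_of_nonneg_left h3 (Real.exp_pos (-(θ * (r + 1)))).le
      rw [← mul_assoc, ← Real.exp_add, neg_add_cancel, Real.exp_zero, one_mul] at this
      linarith
    have h5 : Real.exp (-1 - K) * Real.exp (-(2 * K) * y ^ 2) ≤ Real.exp (-(θ * (r + 1))) := by
      rw [← Real.exp_add]
      apply Real.exp_le_exp.2
      nlinarith [mul_nonneg hK0.le (sq_nonneg (y - 1)), mul_nonneg hK0.le (sq_nonneg y)]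
    have h6 : 0 ≤ 2 * K / q := by positivity
    change _ ≤ p
    linarith
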